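/- Let c, H, C ∈ ℝ, let I ⊆ ℝ be an open interval, and let w : ℝ → ℝ be differentiable on I with w(s) > 0 for all s ∈ I, satisfying (w'(s))² + w(s)²·(c + (H + w(s)^(−2))²) = C for all s ∈ I. Then u := w² is differentiable on I and satisfies (1/4)·(u'(s))² + (c + H²)·u(s)² − (C − 2H)·u(s) + 1 = 0 for all s ∈ I. -/

import Mathlib

theorem delaunay_quadratic_eq_sq_mul_first_integral_sub {K : Type*} [Field K] {w : K}
    (hw : w ≠ 0) (c H C v : K) :
    (w * v) ^ 2 + (c + H ^ 2) * (w ^ 2) ^ 2 - (C - 2 * H) * w ^ 2 + 1 =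
      w ^ 2 * (v ^ 2 + w ^ 2 * (c + (H + w ^ (-2 : ℤ)) ^ 2) - C) := by
  have sq_mul_zpow : w ^ 2 * w ^ (-2 : ℤ) = 1 := by
    rw [zpow_neg, zpow_ofNat, mul_inv_cancel₀ (pow_ne_zero 2 hw)]
  linear_combination (-(2 * H * w ^ 2) - w ^ 2 * w ^ (-2 : ℤ) - 1) * sq_mul_zpow

section Deriv

variable {𝕜 F : Type*} [NontriviallyNormedField 𝕜] [NormedField F] [NormedAlgebra 𝕜 F]
  [NeZero (2 : F)] {w : 𝕜 → F} {s : 𝕜}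

theorem one_div_four_mul_deriv_sq_sq (hd : DifferentiableAt 𝕜 w s) :
    1 / 4 * deriv (fun s => w s ^ 2) s ^ 2 = (w s * deriv w s) ^ 2 := by
  have h4 : (4 : F) ≠ 0 := by
    rw [← two_add_two_eq_four, ← two_mul]
    exact mul_ne_zero two_ne_zero two_ne_zero
  have deriv_sq : deriv (fun s => w s ^ 2) s = 2 * w s * deriv w s := by
    simp [deriv_fun_pow hd]
  rw [deriv_sq]
  field

theorem delaunay_ode_from_first_integral_general (c H C : F) (hd : DifferentiableAt 𝕜 w s)
    (hw : w s ≠ 0)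
    (hint : deriv w s ^ 2 + w s ^ 2 * (c + (H + w s ^ (-2 : ℤ)) ^ 2) = C) :
    DifferentiableAt 𝕜 (fun s => w s ^ 2) s ∧
      1 / 4 * deriv (fun s => w s ^ 2) s ^ 2
        + (c + H ^ 2) * (w s ^ 2) ^ 2 - (C - 2 * H) * w s ^ 2 + 1 = 0 := by
  refine ⟨hd.fun_pow 2, ?_⟩
  rw [one_div_four_mul_deriv_sq_sq hd, delaunay_quadratic_eq_sq_mul_first_integral_sub hw,
    sub_eq_zero.mpr hint, mul_zero]

end Deriv

theorem delaunay_ode_from_first_integral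
    (c H C : ℝ) (p q : ℝ) (w : ℝ → ℝ)
    (hd : ∀ s ∈ Set.Ioo p q, DifferentiableAt ℝ w s)
    (hpos : ∀ s ∈ Set.Ioo p q, 0 < w s)
    (hint : ∀ s ∈ Set.Ioo p q,
      (deriv w s) ^ 2 + w s ^ 2 * (c + (H + w s ^ (-(2 : ℝ))) ^ 2) = C) :
    ∀ s ∈ Set.Ioo p q, DifferentiableAt ℝ (fun s => (w s) ^ 2) s ∧
      (1 / 4) * (deriv (fun s => (w s) ^ 2) s) ^ 2
        + (c + H ^ 2) * ((w s) ^ 2) ^ 2 - (C - 2 * H) * (w s) ^ 2 + 1 = 0 := by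
  intro s hs
  exact delaunay_ode_from_first_integral_general c H C (hd s hs) (hpos s hs).ne'
    (by exact_mod_cast hint s hs)
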